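/- Let G be a countable discrete group. If there exists a continuous linear functional m on ℓ∞(G)/ℝ satisfying m([h ↦ f(gh)] − [f]) = f(g) − f(e) for all g ∈ G and f ∈ ℓ∞(G), then the continuous linear functional μ on ℓ∞(G) defined by μ(f) = f(e) − m([f]) is invariant under the left-translation action of G and satisfies μ(1) = 1. (Vanishing of the Johnson class produces an invariant functional normalising the constants, the key step (3) ⟹ (2) of the characterisation.) -/

import Mathlib

noncomputable section
open scoped ENNReal

/-- `ℓ∞(G)`: the Banach space of bounded real-valued functions on `G` with the sup norm. -/
abbrev Linf (G : Type*) : Type _ := ↥(lp (fun _ : G => ℝ) ∞)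

/-- The left-translation action of `G` on `ℓ∞(G)`: `(g · f)(h) = f (g⁻¹ h)`. -/
def ltrans {G : Type*} [Group G] (g : G) (f : Linf G) : Linf G :=
  ⟨fun h => f (g⁻¹ * h),
    memℓp_infty ⟨‖f‖, by
      rintro x ⟨h, rfl⟩
      exact lp.norm_apply_le_norm ENNReal.top_ne_zero f (g⁻¹ * h)⟩⟩

/-- The constant function `1` as an element of `ℓ∞(G)`. -/
def lone (G : Type*) : Linf G :=
  ⟨fun _ => 1, memℓp_infty ⟨1, by rintro x ⟨h, rfl⟩; simp⟩⟩

/-- The subspace of constant functions in `ℓ∞(G)` (the span of the constant function `1`). -/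
def Consts (G : Type*) : Submodule ℝ (Linf G) := Submodule.span ℝ {lone G}

/-- Right translation: `(rt g f)(h) = f (g h)`, i.e. the function `h ↦ f (g h)`. -/
def rt {G : Type*} [Group G] (g : G) (f : Linf G) : Linf G :=
  ⟨fun h => f (g * h),
    memℓp_infty ⟨‖f‖, by
      rintro x ⟨h, rfl⟩
      exact lp.norm_apply_le_norm ENNReal.top_ne_zero f (g * h)⟩⟩

/-- If the Johnson class vanishes, i.e. some continuous linear functional `m` on `ℓ∞(G)/ℝ`
satisfies `m([h ↦ f(gh)] − [f]) = f(g) − f(e)`, then the continuous linear functional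
`μ(f) = f(e) − m([f])` on `ℓ∞(G)` is `G`-invariant and satisfies `μ(1) = 1`. -/
theorem invariant_functional_of_johnson_class_vanishes
    (G : Type*) [Group G] [Countable G]
    (m : (Linf G ⧸ Consts G) →L[ℝ] ℝ)
    (hm : ∀ (g : G) (f : Linf G),
      m (Submodule.Quotient.mk (rt g f) - Submodule.Quotient.mk f) = f g - f 1) :
    ∃ μ : Linf G →L[ℝ] ℝ,
      (∀ f : Linf G, μ f = f 1 - m (Submodule.Quotient.mk f)) ∧
      (∀ (g : G) (f : Linf G), μ (ltrans g f) = μ f) ∧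
      μ (lone G) = 1 := by
  let ev : Linf G →L[ℝ] ℝ := LinearMap.mkContinuous
    { toFun := fun f => f 1
      map_add' := fun f g => rfl
      map_smul' := fun c f => rfl } 1 (fun f => by
        rw [one_mul]
        exact lp.norm_apply_le_norm ENNReal.top_ne_zero f 1)
  let q : Linf G →L[ℝ] (Linf G ⧸ Consts G) :=
    { toLinearMap := (Consts G).mkQ
      cont := continuous_quot_mk }
  have key : ∀ f : Linf G, (ev - m.comp q) f = f 1 - m (Submodule.Quotient.mk f) :=
    fun f => rfl
  refine ⟨ev - m.comp q, key, fun g f => ?_, ?_⟩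
  · have h := hm g⁻¹ f
    rw [map_sub] at h
    have e1 : rt g⁻¹ f = ltrans g f := rfl
    have e2 : (ltrans g f) 1 = f g⁻¹ := by
      change f (g⁻¹ * 1) = f g⁻¹
      rw [mul_one]
    rw [e1] at h
    rw [key, key, e2]
    linarith
  · rw [key]
    have h0 : (Submodule.Quotient.mk (lone G) : Linf G ⧸ Consts G) = 0 :=
      (Submodule.Quotient.mk_eq_zero _).2 (Submodule.mem_span_singleton_self _)
    rw [h0, map_zero, sub_zero]
    rfl
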